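/- arXiv:2008.08739 — 2 statements merged into one kernel-verified Lean document; each statement's English description precedes it below -/
import Mathlib

section
/- For every real q > 1 and every real λ > 0, λ·∫_{−∞}^{∞} (q^{−t} − q^{−(t+1)})·exp(−(λ/q^t)·((q−1)/q)) dt = 1/ln q. Consequently the scale-invariance constant of smoothed base-q PCSA is κ_{q-PCSA} = 1/ln q. -/
/-! The width of cell `t` is `w * q⁻¹ ^ t` with `w = (q - 1) / q`, so the integrand is
`w * x * exp (-(lam * w * x))` at `x = q⁻¹ ^ t`. Under this substitution `x` runs over `(0, ∞)` and
`dt` has density `1 / (x * log q)`. The factor `x` cancels, and what remains is `1 / log q` times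
`∫ x > 0, w * exp (-(lam * w * x)) = 1 / lam`. -/

open MeasureTheory Set

section ExponentialSubstitution

variable {E : Type*} [NormedAddCommGroup E] [NormedSpace ℝ E]

theorem integral_exp_smul_comp_exp (f : ℝ → E) :
    ∫ u, Real.exp u • f (Real.exp u) = ∫ x in Ioi 0, f x := by
  have change_of_variables := integral_image_eq_integral_abs_deriv_smul MeasurableSet.univ
    (fun u _ ↦ (Real.hasDerivAt_exp u).hasDerivWithinAt) Real.exp_injective.injOn f
  simpa only [image_univ, Real.range_exp, Measure.restrict_univ, Real.abs_exp]
    using change_of_variables.symm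

theorem integral_const_rpow_smul_comp_const_rpow {b : ℝ} (hb : 0 < b) (f : ℝ → E) :
    ∫ t : ℝ, b ^ t • f (b ^ t) = |(Real.log b)⁻¹| • ∫ x in Ioi 0, f x := by
  simp only [Real.rpow_def_of_pos hb]
  rw [Measure.integral_comp_mul_left (fun u ↦ Real.exp u • f (Real.exp u)),
    integral_exp_smul_comp_exp]

end ExponentialSubstitution

theorem integral_exp_neg_mul_Ioi_zero {c : ℝ} (hc : 0 < c) :
    ∫ x in Ioi 0, Real.exp (-(c * x)) = c⁻¹ := by
  simpa [neg_div_neg_eq] using integral_exp_mul_Ioi (neg_lt_zero.mpr hc) 0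

theorem integral_const_rpow_mul_exp_neg_mul_const_rpow {b c : ℝ} (hb : 0 < b) (hc : 0 < c) :
    ∫ t : ℝ, b ^ t * Real.exp (-(c * b ^ t)) = |(Real.log b)⁻¹| * c⁻¹ := by
  simpa only [smul_eq_mul, integral_exp_neg_mul_Ioi_zero hc]
    using integral_const_rpow_smul_comp_const_rpow hb fun x ↦ Real.exp (-(c * x))

theorem rpow_neg_sub_rpow_neg_add_one {q : ℝ} (hq : 0 < q) (t : ℝ) :
    q ^ (-t) - q ^ (-(t + 1)) = (q - 1) / q * q⁻¹ ^ t := by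
  rw [neg_add, Real.rpow_add hq, Real.rpow_neg_one, Real.inv_rpow hq.le, Real.rpow_neg hq.le]
  field_simp

/-- For `q > 1` and `λ > 0`:
`λ·∫_{−∞}^{∞} (q^{−t} − q^{−(t+1)})·exp(−(λ/q^t)·((q−1)/q)) dt = 1/ln q`,
i.e. the scale-invariance constant of smoothed base-`q` PCSA is `κ = 1/ln q`. -/
theorem stmt_12 (q lam : ℝ) (hq : 1 < q) (hlam : 0 < lam) :
    lam * ∫ t : ℝ,
        (q ^ (-t) - q ^ (-(t + 1))) * Real.exp (-((lam / q ^ t) * ((q - 1) / q)))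
      = 1 / Real.log q := by
  have hq_pos : 0 < q := zero_lt_one.trans hq
  set w := (q - 1) / q with hw
  have hw_pos : 0 < w := div_pos (sub_pos.mpr hq) hq_pos
  have integrand_eq (t : ℝ) :
      (q ^ (-t) - q ^ (-(t + 1))) * Real.exp (-(lam / q ^ t * w)) =
        w * (q⁻¹ ^ t * Real.exp (-(lam * w * q⁻¹ ^ t))) := by
    rw [rpow_neg_sub_rpow_neg_add_one hq_pos, ← hw, mul_assoc w, div_mul_eq_mul_div lam,
      div_eq_mul_inv (lam * w), Real.inv_rpow hq_pos.le]
  have abs_inv_log_inv : |(Real.log q⁻¹)⁻¹| = (Real.log q)⁻¹ := by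
    rw [Real.log_inv, inv_neg, abs_neg, abs_of_pos (inv_pos.mpr (Real.log_pos hq))]
  calc lam * ∫ t : ℝ, (q ^ (-t) - q ^ (-(t + 1))) * Real.exp (-(lam / q ^ t * w))
      = lam * (w * ∫ t : ℝ, q⁻¹ ^ t * Real.exp (-(lam * w * q⁻¹ ^ t))) := by
        simp only [integrand_eq, integral_const_mul]
    _ = lam * (w * ((Real.log q)⁻¹ * (lam * w)⁻¹)) := by
        rw [integral_const_rpow_mul_exp_neg_mul_const_rpow (inv_pos.mpr hq_pos)
          (mul_pos hlam hw_pos), abs_inv_log_inv]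
    _ = 1 / Real.log q := by field_simp
end

section
/- The function t ↦ Ḣ(t)/Ṙ(t) is strictly decreasing on (0,∞), where Ḣ(t) = (1/ln 2)·(t·e^{−t} − (1−e^{−t})·ln(1−e^{−t})) and Ṙ(t) = 2t·e^{−t}. -/
/-!
Let `m p = log p / (p - 1)` be the slope of the chord of `log` between `1` and `p`. It is positive
because `log` is increasing, and strictly decreasing because `log` is strictly concave. The summands
of the binary entropy are `-p log p = p (1 - p) m p` and
`-(1 - p) log (1 - p) = p (1 - p) m (1 - p)`, so their ratio `m (1 - p) / m p` is strictly
increasing on `(0, 1)`. The substitution `p = e^{-t}` reverses the monotonicity.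
-/

open Real Set

lemma strictAntiOn_slope_of_strictConcaveOn {𝕜 : Type*} [Field 𝕜] [LinearOrder 𝕜]
    [IsStrictOrderedRing 𝕜] {s : Set 𝕜} {f : 𝕜 → 𝕜} (hf : StrictConcaveOn 𝕜 s f) {a : 𝕜}
    (ha : a ∈ s) : StrictAntiOn (slope f a) (s \ {a}) := by
  rintro x ⟨hx, hxa⟩ y ⟨hy, hya⟩ hxy
  simpa only [slope_def_field] using hf.secant_strict_mono ha hx hy hxa hya hxy

lemma strictAntiOn_slope_log_one : StrictAntiOn (slope log 1) (Ioi 0 \ {1}) :=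
  strictAntiOn_slope_of_strictConcaveOn strictConcaveOn_log_Ioi (mem_Ioi.2 one_pos)

lemma slope_log_one_pos {p : ℝ} (hp : p ∈ Ioi 0 \ {1}) : 0 < slope log 1 p :=
  strictMonoOn_log.slope_pos (mem_Ioi.2 one_pos) hp.1 (Ne.symm hp.2)

lemma negMulLog_eq_mul_slope_log_one (p : ℝ) :
    negMulLog p = p * (1 - p) * slope log 1 p := by
  have hslope : (p - 1) * slope log 1 p = log p := by
    simpa only [smul_eq_mul, vsub_eq_sub, log_one, sub_zero] using sub_smul_slope log 1 p
  rw [negMulLog, ← hslope]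
  ring

lemma negMulLog_one_sub_eq_mul_slope_log_one (p : ℝ) :
    negMulLog (1 - p) = p * (1 - p) * slope log 1 (1 - p) := by
  rw [negMulLog_eq_mul_slope_log_one, sub_sub_cancel, mul_comm p]

lemma binEntropy_div_negMulLog {p : ℝ} (hp : p ∈ Ioo 0 1) :
    binEntropy p / negMulLog p = 1 + slope log 1 (1 - p) / slope log 1 p := by
  have hprefactor : p * (1 - p) ≠ 0 := (mul_pos hp.1 (sub_pos.2 hp.2)).ne'
  have hslope : slope log 1 p ≠ 0 := (slope_log_one_pos ⟨hp.1, hp.2.ne⟩).ne'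
  rw [binEntropy_eq_negMulLog_add_negMulLog_one_sub, negMulLog_one_sub_eq_mul_slope_log_one,
    negMulLog_eq_mul_slope_log_one, ← mul_add, mul_div_mul_left _ _ hprefactor, add_div,
    div_self hslope]

lemma strictMonoOn_slope_log_one_one_sub_div :
    StrictMonoOn (fun p => slope log 1 (1 - p) / slope log 1 p) (Ioo 0 1) := by
  have hsub : Ioo (0 : ℝ) 1 ⊆ Ioi 0 \ {1} := fun _ hp => ⟨hp.1, hp.2.ne⟩
  intro p hp q hq hpq
  have hp' := hsub (Ioo.one_sub_mem hp)
  have hq' := hsub (Ioo.one_sub_mem hq)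
  have hnum : slope log 1 (1 - p) < slope log 1 (1 - q) :=
    strictAntiOn_slope_log_one hq' hp' (sub_lt_sub_left hpq 1)
  have hden : slope log 1 q < slope log 1 p :=
    strictAntiOn_slope_log_one (hsub hp) (hsub hq) hpq
  exact div_lt_div₀ hnum hden.le (slope_log_one_pos hq').le (slope_log_one_pos (hsub hq))

lemma strictMonoOn_binEntropy_div_negMulLog :
    StrictMonoOn (fun p => binEntropy p / negMulLog p) (Ioo 0 1) :=
  (strictMonoOn_slope_log_one_one_sub_div.const_add 1).congr
    fun _ hp => (binEntropy_div_negMulLog hp).symm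

lemma negMulLog_exp_neg (t : ℝ) : negMulLog (exp (-t)) = t * exp (-t) := by
  rw [negMulLog, log_exp, neg_mul_neg, mul_comm]

lemma binEntropy_exp_neg (t : ℝ) :
    binEntropy (exp (-t)) = t * exp (-t) - (1 - exp (-t)) * log (1 - exp (-t)) := by
  rw [binEntropy_eq_negMulLog_add_negMulLog_one_sub, negMulLog_exp_neg, negMulLog, neg_mul,
    ← sub_eq_add_neg]

lemma strictAntiOn_binEntropy_exp_neg_div :
    StrictAntiOn (fun t : ℝ => binEntropy (exp (-t)) / (t * exp (-t))) (Ioi 0) := by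
  have hexp : StrictAntiOn (fun t : ℝ => exp (-t)) (Ioi 0) :=
    fun _ _ _ _ hst => exp_lt_exp.2 (neg_lt_neg hst)
  have hmaps : MapsTo (fun t : ℝ => exp (-t)) (Ioi 0) (Ioo 0 1) :=
    fun t ht => ⟨exp_pos _, exp_lt_one_iff.2 (neg_lt_zero.2 ht)⟩
  simpa only [Function.comp_def, negMulLog_exp_neg] using
    strictMonoOn_binEntropy_div_negMulLog.comp_strictAntiOn hexp hmaps

/-- `Ḣ(t)/Ṙ(t)` is strictly decreasing on `(0,∞)`, where
`Ḣ(t) = (1/ln 2)·(t e^{−t} − (1−e^{−t}) ln(1−e^{−t}))` and `Ṙ(t) = 2t e^{−t}`. -/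
theorem stmt_15 :
    StrictAntiOn
      (fun t : ℝ =>
        ((1 / Real.log 2) *
            (t * Real.exp (-t) - (1 - Real.exp (-t)) * Real.log (1 - Real.exp (-t))))
          / (2 * t * Real.exp (-t)))
      (Set.Ioi 0) := by
  have hfactor : 0 < 1 / log 2 / 2 := by positivity
  have hratio (t : ℝ) : 1 / log 2 * binEntropy (exp (-t)) / (2 * t * exp (-t)) =
      1 / log 2 / 2 * (binEntropy (exp (-t)) / (t * exp (-t))) := by
    rw [mul_assoc, mul_div_mul_comm]
  simp only [← binEntropy_exp_neg, hratio]
  exact fun s hs t ht hst =>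
    mul_lt_mul_of_pos_left (strictAntiOn_binEntropy_exp_neg_div hs ht hst) hfactor
end
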